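/- Suppose F satisfies (G1). Then for every signed measure μ ∈ S^∞ with marginal density φ₁ = d(π₁_*μ)/dm and every n ≥ 1, it holds ‖F^{*n}μ‖_∞ ≤ α^n ‖μ‖_∞ + (1/(1−α)) ‖φ₁‖_∞. -/

import Mathlib

open MeasureTheory ENNReal Set

namespace RDS

/-- The one-sided subshift of finite type `Σ_A^+` determined by the 0-1 matrix `A`. -/
abbrev SigmaA (N : ℕ) (A : Fin N → Fin N → Bool) :=
  {x : ℕ → Fin N // ∀ i, A (x i) (x (i + 1)) = true}

variable {N : ℕ} {A : Fin N → Fin N → Bool}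

/-- The shift map `σ` on `Σ_A^+`. -/
def shift (x : SigmaA N A) : SigmaA N A :=
  ⟨fun i => x.val (i + 1), fun i => x.prop (i + 1)⟩

/-- Aperiodicity of a 0-1 matrix: some power has all entries positive. -/
def Aperiodic (A : Fin N → Fin N → Bool) : Prop :=
  ∃ k : ℕ, 0 < k ∧ ∀ i j,
    0 < ((Matrix.of fun a b => if A a b then (1 : ℕ) else 0) ^ k) i j

/-- The metric `d_θ(x,y) = Σ_i θ^i (1 - δ(x_i, y_i))` on `Σ_A^+`. -/
noncomputable def dTheta (θ : ℝ) (x y : SigmaA N A) : ℝ :=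
  ∑' i : ℕ, θ ^ i * (if x.val i = y.val i then (0 : ℝ) else 1)

/-- Cylinder sets of `Σ_A^+`. -/
def cylinder (n : ℕ) (w : Fin (n + 1) → Fin N) : Set (SigmaA N A) :=
  {x | ∀ i : Fin (n + 1), x.val i = w i}

/-- `m` is a Markov measure on `Σ_A^+` compatible with `A`: it is given on
cylinders by a stochastic matrix `P` (vanishing where `A` vanishes) and a
stationary probability vector `p`. -/
def IsMarkov (m : Measure (SigmaA N A)) : Prop :=
  ∃ (p : Fin N → ℝ≥0∞) (P : Fin N → Fin N → ℝ≥0∞),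
    (∑ i, p i = 1) ∧ (∀ i, ∑ j, P i j = 1) ∧ (∀ j, ∑ i, p i * P i j = p j) ∧
    (∀ i j, A i j = false → P i j = 0) ∧
    ∀ (n : ℕ) (w : Fin (n + 1) → Fin N),
      m (cylinder n w) = p (w 0) * ∏ i : Fin n, P (w i.castSucc) (w i.succ)

/-- `σ_i⁻¹(γ)`: the sequence `γ` with the symbol `i` prepended
(defined when `A i γ₀ = 1`), i.e. the inverse branch of the restriction `σ_i`
of `σ` to the cylinder `[i]`. -/
def prepend (i : Fin N) (x : SigmaA N A) (h : A i (x.val 0) = true) : SigmaA N A :=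
  ⟨fun n => match n with
    | 0 => i
    | Nat.succ k => x.val k,
   fun j => match j with
    | 0 => h
    | Nat.succ k => x.prop k⟩

/-- `f` is `L`-Lipschitz with respect to the distance function `d`. -/
def LipWithD {X : Type*} (d : X → X → ℝ) (L : ℝ) (f : X → ℝ) : Prop :=
  ∀ x y, |f x - f y| ≤ L * d x y

/-- `f` is Lipschitz with respect to the distance function `d`. -/
def LipD {X : Type*} (d : X → X → ℝ) (f : X → ℝ) : Prop :=
  ∃ L : ℝ, LipWithD d L f

/-- The best Lipschitz constant of `f` with respect to `d` (valued in `ℝ≥0∞`). -/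
noncomputable def lipConst {X : Type*} (d : X → X → ℝ) (f : X → ℝ) : ℝ≥0∞ :=
  ⨆ (x : X) (y : X), ENNReal.ofReal (|f x - f y| / d x y)

/-- The sup norm of `f` (valued in `ℝ≥0∞`). -/
noncomputable def supNormE {X : Type*} (f : X → ℝ) : ℝ≥0∞ :=
  ⨆ x : X, ENNReal.ofReal |f x|

/-- The norm `‖f‖_θ = ‖f‖_∞ + Lip_d(f)`. -/
noncomputable def thetaNorm {X : Type*} (d : X → X → ℝ) (f : X → ℝ) : ℝ≥0∞ :=
  supNormE f + lipConst d f

/-- The Perron-Frobenius operator duality characterizing `P_σ`: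
`∫ P_σ(φ) · ψ dm = ∫ φ · (ψ ∘ σ) dm` for integrable `φ` and bounded measurable `ψ`. -/
def IsPerronFrobenius (m : Measure (SigmaA N A))
    (Pσ : (SigmaA N A → ℝ) → SigmaA N A → ℝ) : Prop :=
  ∀ φ ψ : SigmaA N A → ℝ, Integrable φ m → Measurable ψ → (∃ C, ∀ x, |ψ x| ≤ C) →
    ∫ x, Pσ φ x * ψ x ∂m = ∫ x, φ x * ψ (shift x) ∂m

/-- Spectral gap for `P_σ` on `d_θ`-Lipschitz functions with constants `D`, `r`:
`‖P_σ^n φ‖_θ ≤ D r^n ‖φ‖_θ` for all `n` and all `d_θ`-Lipschitz `φ` with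
`∫ φ dm = 0`. -/
def HasGap (m : Measure (SigmaA N A)) (θ : ℝ)
    (Pσ : (SigmaA N A → ℝ) → SigmaA N A → ℝ) (D r : ℝ) : Prop :=
  ∀ φ : SigmaA N A → ℝ, LipD (dTheta θ) φ → (∫ x, φ x ∂m) = 0 →
    ∀ n : ℕ, thetaNorm (dTheta θ) (Pσ^[n] φ) ≤
      ENNReal.ofReal (D * r ^ n) * thetaNorm (dTheta θ) φ

/-- `Jm i` is the Jacobian `J_{m,σ_i}` of `m` with respect to the branch `σ_i`
(the restriction of `σ` to the cylinder `[i]`): `m (σ_i(E)) = ∫_E J_{m,σ_i} dm`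
for every measurable `E` (intersected with `[i]`). -/
def IsJacobian (m : Measure (SigmaA N A)) (Jm : Fin N → SigmaA N A → ℝ) : Prop :=
  ∀ (i : Fin N) (E : Set (SigmaA N A)), MeasurableSet E →
    m {γ : SigmaA N A | ∃ h : A i (γ.val 0) = true, prepend i γ h ∈ E} =
      ∫⁻ x in E ∩ {x : SigmaA N A | x.val 0 = i}, ENNReal.ofReal (Jm i x) ∂m

variable {K : Type*} [MetricSpace K] [MeasurableSpace K]

/-- The Wasserstein-Kantorovich like distance `W(ν₁,ν₂)`: the supremum of
`|∫ g dν₁ - ∫ g dν₂|` over `g : K → ℝ` with `Lip(g) ≤ 1` and `‖g‖_∞ ≤ 1`.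
Applied with `ν₂ = 0` it gives the norm `‖ν₁‖_W`; applied to the two parts of a
decomposition of a signed measure it gives its `‖·‖_W` norm. -/
noncomputable def wDist (ν₁ ν₂ : Measure K) : ℝ≥0∞ :=
  ⨆ g : {g : K → ℝ // LipschitzWith 1 g ∧ ∀ z, |g z| ≤ 1},
    ENNReal.ofReal |∫ z, g.val z ∂ν₁ - ∫ z, g.val z ∂ν₂|

/-- The skew product `F(x,z) = (σ(x), G(x,z))`. -/
def skew (G : SigmaA N A × K → K) (p : SigmaA N A × K) : SigmaA N A × K :=
  (shift p.1, G p)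

/-- The transfer operator `F^* μ (E) = μ (F⁻¹ E)` acting on signed measures. -/
noncomputable def transfer (G : SigmaA N A × K → K)
    (μ : SignedMeasure (SigmaA N A × K)) : SignedMeasure (SigmaA N A × K) :=
  μ.map (skew G)

/-- Condition (G1): uniform contraction of the vertical fibers with rate `α`. -/
def CondG1 (G : SigmaA N A × K → K) (α : ℝ) : Prop :=
  ∀ (x : SigmaA N A) (z₁ z₂ : K), dist (G (x, z₁)) (G (x, z₂)) ≤ α * dist z₁ z₂

/-- Condition (G2): `x ↦ G(x,z)` is `d_θ`-Lipschitz with constant `H`,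
uniformly in `z`. -/
def CondG2 (θ : ℝ) (G : SigmaA N A × K → K) (H : ℝ) : Prop :=
  ∀ (z : K) (x y : SigmaA N A), dist (G (x, z)) (G (y, z)) ≤ H * dTheta θ x y

/-- `T` is (the path `γ ↦ μ|_γ` of) a disintegration of `μ` along the vertical
fibers, over the reference measure `m`: `μ(E) = ∫ (μ|_γ)(E ∩ γ) dm(γ)`. -/
def IsDisint (m : Measure (SigmaA N A)) (μ : Measure (SigmaA N A × K))
    (T : SigmaA N A → Measure K) : Prop :=
  (∀ E : Set (SigmaA N A × K), MeasurableSet E →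
      μ E = ∫⁻ γ, T γ {z | (γ, z) ∈ E} ∂m) ∧
  ∀ E : Set K, MeasurableSet E → Measurable fun γ => T γ E

/-- The (essential) `‖·‖_W`-Lipschitz constant of a path of measures,
`|Γ|_θ^ω = ess sup_{γ₁ ≠ γ₂} ‖Γ(γ₁) - Γ(γ₂)‖_W / d_θ(γ₁,γ₂)`. -/
noncomputable def pathLip (m : Measure (SigmaA N A)) (θ : ℝ)
    (T : SigmaA N A → Measure K) : ℝ≥0∞ :=
  essSup (fun p : SigmaA N A × SigmaA N A =>
    wDist (T p.1) (T p.2) / ENNReal.ofReal (dTheta θ p.1 p.2)) (m.prod m)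

/-- The Lipschitz constant `|μ|_θ` of a positive measure: the infimum over
disintegrations `ω` of `μ` of `|μ|_θ^ω`. -/
noncomputable def lipDisint (m : Measure (SigmaA N A)) (θ : ℝ)
    (μ : Measure (SigmaA N A × K)) : ℝ≥0∞ :=
  ⨅ T : {T : SigmaA N A → Measure K // IsDisint m μ T}, pathLip m θ T.val

/-- The fiberwise transfer formula: the path representing `F^*μ` induced by the
path `T` representing `μ`, i.e.
`γ ↦ Σ_i 1_{σ([i])}(γ) (F_{iγ})_*(T(iγ)) / J_{m,σ_i}(iγ)`. -/
noncomputable def transferPath (G : SigmaA N A × K → K) (Jm : Fin N → SigmaA N A → ℝ)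
    (T : SigmaA N A → Measure K) : SigmaA N A → Measure K :=
  fun γ => ∑ i : Fin N, if h : A i (γ.val 0) = true then
      ENNReal.ofReal ((Jm i (prepend i γ h))⁻¹) •
        ((T (prepend i γ h)).map fun z => G (prepend i γ h, z))
    else 0

variable [BorelSpace K] [CompactSpace K] [Nonempty K]

/-- The fiberwise restriction `μ|_γ = π₂_* (φ₁(γ) μ_γ)` of a finite positive
measure `μ` on `Σ_A^+ × K`, where `({μ_γ}_γ, φ₁ m)` is the Rokhlin
disintegration of `μ` along the vertical fibers and `φ₁ = d(π₁_*μ)/dm`. -/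
noncomputable def fiberR (m : Measure (SigmaA N A))
    (μ : Measure (SigmaA N A × K)) (γ : SigmaA N A) : Measure K := by
  by_cases h : IsFiniteMeasure μ
  · haveI := h
    exact (μ.fst.rnDeriv m γ) • μ.condKernel γ
  · exact 0

/-- The norm `‖μ‖_∞ = ess sup_γ ‖μ|_γ‖_W` of a signed measure written as a
difference `μ = μ₁ - μ₂` of positive measures. -/
noncomputable def infNormPair (m : Measure (SigmaA N A))
    (μ₁ μ₂ : Measure (SigmaA N A × K)) : ℝ≥0∞ :=
  essSup (fun γ => wDist (fiberR m μ₁ γ) (fiberR m μ₂ γ)) m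

/-- The marginal density `φ₁ = d(π₁_*μ)/dm` of the signed measure `μ = μ₁ - μ₂`. -/
noncomputable def phiPair (m : Measure (SigmaA N A))
    (μ₁ μ₂ : Measure (SigmaA N A × K)) (γ : SigmaA N A) : ℝ :=
  (μ₁.fst.rnDeriv m γ).toReal - (μ₂.fst.rnDeriv m γ).toReal

/-- Membership in `AB`: both parts are finite with first marginal absolutely
continuous with respect to `m`. -/
def MemABPair (m : Measure (SigmaA N A)) (μ₁ μ₂ : Measure (SigmaA N A × K)) : Prop :=
  μ₁.fst ≪ m ∧ μ₂.fst ≪ m ∧ IsFiniteMeasure μ₁ ∧ IsFiniteMeasure μ₂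

/-- Membership in `S^∞`: `μ ∈ AB`, `‖μ‖_∞ < ∞` and the marginal density `φ₁`
has a `d_θ`-Lipschitz version. -/
def MemSPair (m : Measure (SigmaA N A)) (θ : ℝ)
    (μ₁ μ₂ : Measure (SigmaA N A × K)) : Prop :=
  MemABPair m μ₁ μ₂ ∧ infNormPair m μ₁ μ₂ < ⊤ ∧
    ∃ ψ : SigmaA N A → ℝ, ψ =ᵐ[m] phiPair m μ₁ μ₂ ∧ LipD (dTheta θ) ψ

/-- `‖φ₁‖_θ`, computed on the best version of the marginal density. -/
noncomputable def thetaNormMu (m : Measure (SigmaA N A)) (θ : ℝ)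
    (μ₁ μ₂ : Measure (SigmaA N A × K)) : ℝ≥0∞ :=
  ⨅ ψ : {ψ : SigmaA N A → ℝ // ψ =ᵐ[m] phiPair m μ₁ μ₂}, thetaNorm (dTheta θ) ψ.val

/-- The norm `‖μ‖_{S^∞} = ‖φ₁‖_θ + ‖μ‖_∞`. -/
noncomputable def sNormPair (m : Measure (SigmaA N A)) (θ : ℝ)
    (μ₁ μ₂ : Measure (SigmaA N A × K)) : ℝ≥0∞ :=
  thetaNormMu m θ μ₁ μ₂ + infNormPair m μ₁ μ₂

/-- Positive part of a signed measure. -/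
noncomputable def jPos {X : Type*} [MeasurableSpace X] (μ : SignedMeasure X) : Measure X :=
  μ.toJordanDecomposition.posPart

/-- Negative part of a signed measure. -/
noncomputable def jNeg {X : Type*} [MeasurableSpace X] (μ : SignedMeasure X) : Measure X :=
  μ.toJordanDecomposition.negPart

/-- Membership in `AB` for signed measures. -/
def MemAB (m : Measure (SigmaA N A)) (μ : SignedMeasure (SigmaA N A × K)) : Prop :=
  MemABPair m (jPos μ) (jNeg μ)

/-- Membership in `S^∞` for signed measures. -/
def MemS (m : Measure (SigmaA N A)) (θ : ℝ) (μ : SignedMeasure (SigmaA N A × K)) : Prop :=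
  MemSPair m θ (jPos μ) (jNeg μ)

/-- `‖μ‖_∞` for signed measures. -/
noncomputable def infNorm (m : Measure (SigmaA N A))
    (μ : SignedMeasure (SigmaA N A × K)) : ℝ≥0∞ :=
  infNormPair m (jPos μ) (jNeg μ)

/-- `‖μ‖_{S^∞}` for signed measures. -/
noncomputable def sNorm (m : Measure (SigmaA N A)) (θ : ℝ)
    (μ : SignedMeasure (SigmaA N A × K)) : ℝ≥0∞ :=
  sNormPair m θ (jPos μ) (jNeg μ)

/-- `‖φ₁‖_∞` of the marginal density of a signed measure. -/
noncomputable def phiSup (m : Measure (SigmaA N A))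
    (μ : SignedMeasure (SigmaA N A × K)) : ℝ≥0∞ :=
  essSup (fun γ => ENNReal.ofReal |phiPair m (jPos μ) (jNeg μ) γ|) m

/-!
Apply the estimate directly to `Fⁿ`, a skew product over `σⁿ` contracting the fibres by `αⁿ`, rather
than iterating a one-step inequality. A test function `g` pulled back along `Fⁿ` to the fibre over
`γ` equals a constant of absolute value at most `1` plus `αⁿ` times another test function, so its
integral against `μ|_γ` is at most `αⁿ ‖μ|_γ‖_W + |φ₁(γ)|`. The function `γ ↦ ∫ g d(F^{*n}μ)|_γ` is
the image of this one under the Perron–Frobenius operator of `σⁿ`, which does not increase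
essential suprema because `σⁿ` preserves `m`. Finally, a countable family of test functions suffices
to compute `‖·‖_W`, so the exceptional null sets can be united.
-/

open scoped NNReal

theorem integrable_of_forall_abs_le {X : Type*} [MeasurableSpace X] {f : X → ℝ} {C : ℝ}
    (hf : Measurable f) (hf_le : ∀ x, |f x| ≤ C) (μ : Measure X) [IsFiniteMeasure μ] :
    Integrable f μ :=
  .of_bound hf.aestronglyMeasurable C (.of_forall hf_le)

section TestFunctions

variable {Z : Type*} [MetricSpace Z]

/-- The test functions of the Wasserstein–Kantorovich distance `wDist`. -/
def IsTestFunction (g : Z → ℝ) : Prop :=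
  LipschitzWith 1 g ∧ ∀ z, |g z| ≤ 1

theorem exists_isTestFunction_eq_add_mul (hZ : ∀ z w : Z, dist z w ≤ 1) {a : ℝ≥0} {h : Z → ℝ}
    (hh : LipschitzWith a h) (z₀ : Z) :
    ∃ k : Z → ℝ, IsTestFunction k ∧ ∀ z, h z = h z₀ + a * k z := by
  have hdist (z w : Z) : |h z - h w| ≤ a * dist z w := hh.dist_le_mul z w
  -- For `a = 0` the junk value `a⁻¹ = 0` makes `k = 0`, as it should be.
  have hinv : (a : ℝ)⁻¹ * a ≤ 1 := inv_mul_le_one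
  have hk (z w : Z) : |(a : ℝ)⁻¹ * (h z - h w)| ≤ dist z w := calc
    |(a : ℝ)⁻¹ * (h z - h w)| = (a : ℝ)⁻¹ * |h z - h w| := by
      rw [abs_mul, abs_of_nonneg (by positivity)]
    _ ≤ (a : ℝ)⁻¹ * (a * dist z w) := by gcongr; exact hdist z w
    _ = (a : ℝ)⁻¹ * a * dist z w := by ring
    _ ≤ dist z w := mul_le_of_le_one_left dist_nonneg hinv
  refine ⟨fun z => (a : ℝ)⁻¹ * (h z - h z₀), ⟨.of_dist_le_mul fun z w => ?_, fun z => ?_⟩,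
    fun z => ?_⟩
  · rw [Real.dist_eq, ← mul_sub, sub_sub_sub_cancel_right, NNReal.coe_one, one_mul]
    exact hk z w
  · exact (hk z z₀).trans (hZ z z₀)
  · rcases eq_or_ne a 0 with rfl | ha
    · have : |h z - h z₀| ≤ 0 := by simpa using hdist z z₀
      simpa [sub_eq_zero] using this
    · field_simp
      ring

variable [MeasurableSpace Z]

theorem IsTestFunction.ofReal_abs_integral_sub_le_wDist {g : Z → ℝ} (hg : IsTestFunction g)
    (ν₁ ν₂ : Measure Z) :
    ENNReal.ofReal |∫ z, g z ∂ν₁ - ∫ z, g z ∂ν₂| ≤ wDist ν₁ ν₂ :=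
  le_iSup (fun g : {g : Z → ℝ // LipschitzWith 1 g ∧ ∀ z, |g z| ≤ 1} =>
    ENNReal.ofReal |∫ z, g.val z ∂ν₁ - ∫ z, g.val z ∂ν₂|) ⟨g, hg⟩

variable [OpensMeasurableSpace Z]

theorem IsTestFunction.measurable {g : Z → ℝ} (hg : IsTestFunction g) : Measurable g :=
  hg.1.continuous.measurable

theorem IsTestFunction.integrable {g : Z → ℝ} (hg : IsTestFunction g) (ν : Measure Z)
    [IsFiniteMeasure ν] : Integrable g ν :=
  integrable_of_forall_abs_le hg.measurable hg.2 ν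

theorem ofReal_abs_integral_sub_le_mul_wDist_add (hZ : ∀ z w : Z, dist z w ≤ 1)
    (ν₁ ν₂ : Measure Z) [IsFiniteMeasure ν₁] [IsFiniteMeasure ν₂] {a : ℝ≥0} {h : Z → ℝ}
    (hh : LipschitzWith a h) (hh_le : ∀ z, |h z| ≤ 1) :
    ENNReal.ofReal |∫ z, h z ∂ν₁ - ∫ z, h z ∂ν₂| ≤
      a * wDist ν₁ ν₂ + ENNReal.ofReal |ν₁.real univ - ν₂.real univ| := by
  rcases isEmpty_or_nonempty Z with _ | ⟨⟨z₀⟩⟩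
  · rw [Measure.eq_zero_of_isEmpty ν₁, Measure.eq_zero_of_isEmpty ν₂, sub_self, abs_zero,
      ENNReal.ofReal_zero]
    exact zero_le
  obtain ⟨k, hk, hk_eq⟩ := exists_isTestFunction_eq_add_mul hZ hh z₀
  have hint (ν : Measure Z) [IsFiniteMeasure ν] :
      ∫ z, h z ∂ν = a * ∫ z, k z ∂ν + h z₀ * ν.real univ := by
    rw [integral_congr_ae (.of_forall hk_eq), integral_add (integrable_const _)
      ((hk.integrable ν).const_mul _), integral_const_mul, integral_const, smul_eq_mul]
    ring
  have hreal : |∫ z, h z ∂ν₁ - ∫ z, h z ∂ν₂| ≤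
      a * |∫ z, k z ∂ν₁ - ∫ z, k z ∂ν₂| + |ν₁.real univ - ν₂.real univ| := calc
    _ = |a * (∫ z, k z ∂ν₁ - ∫ z, k z ∂ν₂) + h z₀ * (ν₁.real univ - ν₂.real univ)| := by
      rw [hint ν₁, hint ν₂]; ring_nf
    _ ≤ a * |∫ z, k z ∂ν₁ - ∫ z, k z ∂ν₂| + |h z₀| * |ν₁.real univ - ν₂.real univ| := by
      grw [abs_add_le, abs_mul, abs_mul, NNReal.abs_eq]
    _ ≤ _ := by grw [hh_le z₀, one_mul]
  grw [hreal, ENNReal.ofReal_add (by positivity) (by positivity),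
    ENNReal.ofReal_mul a.coe_nonneg, ENNReal.ofReal_coe_nnreal,
    hk.ofReal_abs_integral_sub_le_wDist]

variable [CompactSpace Z]

theorem continuous_integral_isTestFunction (ν : Measure Z) [IsFiniteMeasure ν] :
    Continuous fun g : {g : C(Z, ℝ) // IsTestFunction g} => ∫ z, g.1 z ∂ν :=
  continuous_of_dominated (bound := fun _ => 1)
    (fun g => g.2.measurable.aestronglyMeasurable) (fun g => .of_forall g.2.2)
    (integrable_const _)
    (.of_forall fun z => (continuous_eval_const z).comp continuous_subtype_val)

variable (Z) in
theorem exists_countable_isTestFunction_forall_wDist_le :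
    ∃ D : Set (Z → ℝ), D.Countable ∧ (∀ g ∈ D, IsTestFunction g) ∧
      ∀ (ν₁ ν₂ : Measure Z) [IsFiniteMeasure ν₁] [IsFiniteMeasure ν₂] (C : ℝ≥0∞),
        (∀ g ∈ D, ENNReal.ofReal |∫ z, g z ∂ν₁ - ∫ z, g z ∂ν₂| ≤ C) → wDist ν₁ ν₂ ≤ C := by
  obtain ⟨D, hD, hD_dense⟩ :=
    TopologicalSpace.exists_countable_dense {g : C(Z, ℝ) // IsTestFunction g}
  refine ⟨(fun g z => g.1 z) '' D, hD.image _, ?_, fun ν₁ ν₂ _ _ C hC => iSup_le fun g => ?_⟩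
  · rintro _ ⟨g, -, rfl⟩
    exact g.2
  have hclosed : IsClosed {g : {g : C(Z, ℝ) // IsTestFunction g} |
      ENNReal.ofReal |∫ z, g.1 z ∂ν₁ - ∫ z, g.1 z ∂ν₂| ≤ C} :=
    isClosed_le (ENNReal.continuous_ofReal.comp ((continuous_integral_isTestFunction ν₁).sub
      (continuous_integral_isTestFunction ν₂)).abs) continuous_const
  exact hclosed.closure_subset_iff.2 (fun g hg => hC _ ⟨g, hg, rfl⟩)
    (hD_dense ⟨⟨g.1, g.2.1.continuous⟩, g.2⟩)

theorem ae_wDist_le_of_forall_isTestFunction {Ω : Type*} [MeasurableSpace Ω] {m : Measure Ω}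
    {κ₁ κ₂ : Ω → Measure Z} (hκ₁ : ∀ᵐ ω ∂m, IsFiniteMeasure (κ₁ ω))
    (hκ₂ : ∀ᵐ ω ∂m, IsFiniteMeasure (κ₂ ω)) {C : ℝ≥0∞}
    (hC : ∀ g, IsTestFunction g →
      ∀ᵐ ω ∂m, ENNReal.ofReal |∫ z, g z ∂κ₁ ω - ∫ z, g z ∂κ₂ ω| ≤ C) :
    ∀ᵐ ω ∂m, wDist (κ₁ ω) (κ₂ ω) ≤ C := by
  obtain ⟨D, hD, hD_test, hD_le⟩ := exists_countable_isTestFunction_forall_wDist_le Z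
  filter_upwards [hκ₁, hκ₂, (ae_ball_iff hD).2 fun g hg => hC g (hD_test g hg)]
    with ω _ _ hω using hD_le _ _ C hω

end TestFunctions

section PerronFrobenius

variable {X Y : Type*} [MeasurableSpace X] [MeasurableSpace Y] {μ : Measure X} {ν : Measure Y}
  [SigmaFinite ν] {τ : X → Y} {u : Y → ℝ} {v : X → ℝ}

theorem ae_le_of_setIntegral_eq_setIntegral_preimage (hτ : MeasurePreserving τ μ ν)
    (hu : Integrable u ν) (hv : Integrable v μ)
    (huv : ∀ B, MeasurableSet B → ∫ y in B, u y ∂ν = ∫ x in τ ⁻¹' B, v x ∂μ)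
    {C : ℝ} (hC : ∀ᵐ x ∂μ, v x ≤ C) : ∀ᵐ y ∂ν, u y ≤ C := by
  suffices 0 ≤ᵐ[ν] fun y => C - u y from this.mono fun y hy => sub_nonneg.1 hy
  refine ae_nonneg_of_forall_setIntegral_nonneg_of_sigmaFinite
    (fun B _ hB => (integrableOn_const hB.ne).sub hu.integrableOn) fun B hB hB_top => ?_
  have hpre : μ (τ ⁻¹' B) = ν B := hτ.measure_preimage hB.nullMeasurableSet
  have hconst : IntegrableOn (fun _ => C) B ν := integrableOn_const hB_top.ne
  rw [integral_sub hconst hu.integrableOn, sub_nonneg, huv B hB]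
  calc ∫ x in τ ⁻¹' B, v x ∂μ
      ≤ ∫ _ in τ ⁻¹' B, C ∂μ :=
        setIntegral_mono_ae hv.integrableOn (integrableOn_const (hpre ▸ hB_top.ne)) hC
    _ = ∫ _ in B, C ∂ν := by
        rw [setIntegral_const, setIntegral_const, measureReal_def, hpre, measureReal_def]

theorem ae_abs_le_of_setIntegral_eq_setIntegral_preimage (hτ : MeasurePreserving τ μ ν)
    (hu : Integrable u ν) (hv : Integrable v μ)
    (huv : ∀ B, MeasurableSet B → ∫ y in B, u y ∂ν = ∫ x in τ ⁻¹' B, v x ∂μ)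
    {C : ℝ} (hC : ∀ᵐ x ∂μ, |v x| ≤ C) : ∀ᵐ y ∂ν, |u y| ≤ C := by
  have hle := ae_le_of_setIntegral_eq_setIntegral_preimage hτ hu hv huv
    (hC.mono fun x hx => (abs_le'.1 hx).1)
  have hneg := ae_le_of_setIntegral_eq_setIntegral_preimage hτ hu.neg hv.neg
    (fun B hB => by simp only [Pi.neg_apply, integral_neg, huv B hB])
    (hC.mono fun x hx => (abs_le'.1 hx).2)
  filter_upwards [hle, hneg] with y h₁ h₂ using abs_le'.2 ⟨h₁, h₂⟩

end PerronFrobenius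

section SignedMeasures

variable {X Y : Type*} [MeasurableSpace X] [MeasurableSpace Y]

instance instIsFiniteMeasureJPos (μ : SignedMeasure X) : IsFiniteMeasure (jPos μ) :=
  μ.toJordanDecomposition.posPart_finite

instance instIsFiniteMeasureJNeg (μ : SignedMeasure X) : IsFiniteMeasure (jNeg μ) :=
  μ.toJordanDecomposition.negPart_finite

theorem totalVariation_map_le (μ : SignedMeasure X) (Φ : X → Y) :
    SignedMeasure.totalVariation (μ.map Φ) ≤ μ.totalVariation.map Φ := by
  simpa only [SignedMeasure.totalVariation_eq_variation] using VectorMeasure.variation_map_le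

theorem jPos_map_add_map_jNeg (μ : SignedMeasure X) {Φ : X → Y} (hΦ : Measurable Φ) :
    jPos (μ.map Φ) + (jNeg μ).map Φ = (jPos μ).map Φ + jNeg (μ.map Φ) := by
  ext E hE
  have hE_map : (μ.map Φ) E = μ (Φ ⁻¹' E) := VectorMeasure.map_apply μ hΦ hE
  rw [SignedMeasure.apply_eq_posPart_real_sub_negPart_real _ hE,
    SignedMeasure.apply_eq_posPart_real_sub_negPart_real _ (hΦ hE)] at hE_map
  rw [← measureReal_eq_measureReal_iff, measureReal_add_apply, measureReal_add_apply,
    map_measureReal_apply hΦ hE, map_measureReal_apply hΦ hE]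
  simp only [jPos, jNeg]
  linarith

theorem iterate_map_eq_map_iterate (μ : SignedMeasure X) {Φ : X → X} (hΦ : Measurable Φ) (n : ℕ) :
    (fun ν : SignedMeasure X => ν.map Φ)^[n] μ = μ.map Φ^[n] := by
  induction n with
  | zero => exact (VectorMeasure.map_id μ).symm
  | succ n ih =>
    ext E hE
    rw [Function.iterate_succ_apply', ih, VectorMeasure.map_apply _ hΦ hE,
      VectorMeasure.map_apply _ (hΦ.iterate n) (hΦ hE),
      VectorMeasure.map_apply _ (hΦ.iterate (n + 1)) hE, Function.iterate_succ', preimage_comp]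

end SignedMeasures

section SkewProducts

variable {X Z : Type*} [MeasurableSpace X] [MeasurableSpace Z]

theorem fst_map_of_semiconj {τ : X → X} {Φ : X × Z → X × Z} (hτ : Measurable τ)
    (hΦ : Measurable Φ) (hΦτ : Function.Semiconj Prod.fst Φ τ) (μ : Measure (X × Z)) :
    (μ.map Φ).fst = μ.fst.map τ := by
  rw [Measure.fst, Measure.fst, Measure.map_map measurable_fst hΦ,
    Measure.map_map hτ measurable_fst, hΦτ.comp_eq]

variable [PseudoMetricSpace Z]

/-- `Φ` is a measurable skew product over `τ` which is `a`-Lipschitz on every vertical fibre. It is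
the property of the pair `(σ, F)` under (G1) that passes to the iterates `(σⁿ, Fⁿ)`. -/
structure IsFiberLipschitz (a : ℝ≥0) (τ : X → X) (Φ : X × Z → X × Z) : Prop where
  measurable : Measurable Φ
  semiconj : Function.Semiconj Prod.fst Φ τ
  lipschitzWith : ∀ x, LipschitzWith a fun z => (Φ (x, z)).2

namespace IsFiberLipschitz

variable {a b : ℝ≥0} {τ τ' : X → X} {Φ Ψ : X × Z → X × Z}

theorem id : IsFiberLipschitz 1 (id : X → X) (id : X × Z → X × Z) where
  measurable := measurable_id
  semiconj _ := rfl
  lipschitzWith _ := LipschitzWith.id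

theorem comp (hΦ : IsFiberLipschitz a τ Φ) (hΨ : IsFiberLipschitz b τ' Ψ) :
    IsFiberLipschitz (a * b) (τ ∘ τ') (Φ ∘ Ψ) where
  measurable := hΦ.measurable.comp hΨ.measurable
  semiconj := hΦ.semiconj.comp_right hΨ.semiconj
  lipschitzWith x := by
    have hΨx (z : Z) : Ψ (x, z) = (τ' x, (Ψ (x, z)).2) := Prod.ext (hΨ.semiconj _) rfl
    have hcomp : (fun z => ((Φ ∘ Ψ) (x, z)).2) =
        (fun w => (Φ (τ' x, w)).2) ∘ fun z => (Ψ (x, z)).2 :=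
      funext fun z => by rw [Function.comp_apply, hΨx]; rfl
    rw [hcomp]
    exact (hΦ.lipschitzWith _).comp (hΨ.lipschitzWith x)

theorem iterate (hΦ : IsFiberLipschitz a τ Φ) (n : ℕ) :
    IsFiberLipschitz (a ^ n) τ^[n] Φ^[n] := by
  induction n with
  | zero => simpa using IsFiberLipschitz.id
  | succ n ih => simpa only [pow_succ, Function.iterate_succ] using ih.comp hΦ

end IsFiberLipschitz

end SkewProducts

section SubshiftBase

theorem measurable_shift : Measurable (shift : SigmaA N A → SigmaA N A) := by
  refine Measurable.subtype_mk (measurable_pi_lambda _ fun i => ?_)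
  exact (measurable_pi_apply (i + 1)).comp measurable_subtype_coe

theorem CondG1.isFiberLipschitz_skew {Z : Type*} [MetricSpace Z] [MeasurableSpace Z]
    {G : SigmaA N A × Z → Z} {α : ℝ≥0} (hG1 : CondG1 G α) (hG : Measurable (skew G)) :
    IsFiberLipschitz α shift (skew G) where
  measurable := hG
  semiconj _ := rfl
  lipschitzWith x := .of_dist_le_mul (hG1 x)

theorem memAB_iff_fst_totalVariation_absolutelyContinuous {Z : Type*} [MeasurableSpace Z]
    {m : Measure (SigmaA N A)} {μ : SignedMeasure (SigmaA N A × Z)} :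
    MemAB m μ ↔ μ.totalVariation.fst ≪ m := by
  have hfst : μ.totalVariation.fst = (jPos μ).fst + (jNeg μ).fst :=
    Measure.map_add _ _ measurable_fst
  rw [hfst, Measure.AbsolutelyContinuous.add_left_iff]
  exact ⟨fun h => ⟨h.1, h.2.1⟩, fun h => ⟨h.1, h.2, inferInstance, inferInstance⟩⟩

theorem MemAB.map {Z : Type*} [MeasurableSpace Z] {m : Measure (SigmaA N A)}
    {μ : SignedMeasure (SigmaA N A × Z)} (hμ : MemAB m μ) {τ : SigmaA N A → SigmaA N A}
    {Φ : SigmaA N A × Z → SigmaA N A × Z} (hτ : Measure.QuasiMeasurePreserving τ m m)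
    (hΦ : Measurable Φ) (hΦτ : Function.Semiconj Prod.fst Φ τ) : MemAB m (μ.map Φ) := by
  rw [memAB_iff_fst_totalVariation_absolutelyContinuous] at hμ ⊢
  have hle : (SignedMeasure.totalVariation (μ.map Φ)).fst ≤ μ.totalVariation.fst.map τ := by
    rw [← fst_map_of_semiconj hτ.measurable hΦ hΦτ]
    exact Measure.map_mono (totalVariation_map_le μ Φ) measurable_fst
  exact hle.absolutelyContinuous.trans ((hμ.map hτ.measurable).trans hτ.absolutelyContinuous)

end SubshiftBase

section Fibers

variable {m : Measure (SigmaA N A)} {μ : Measure (SigmaA N A × K)} [IsFiniteMeasure μ]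

theorem fiberR_eq_smul_condKernel (γ : SigmaA N A) :
    fiberR m μ γ = μ.fst.rnDeriv m γ • μ.condKernel γ :=
  dif_pos ‹IsFiniteMeasure μ›

theorem fiberR_real_univ (γ : SigmaA N A) :
    (fiberR m μ γ).real univ = (μ.fst.rnDeriv m γ).toReal := by
  rw [fiberR_eq_smul_condKernel, measureReal_ennreal_smul_apply, probReal_univ, mul_one]

theorem integral_fiberR (g : K → ℝ) (γ : SigmaA N A) :
    ∫ z, g z ∂fiberR m μ γ = (μ.fst.rnDeriv m γ).toReal * ∫ z, g z ∂μ.condKernel γ := by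
  rw [fiberR_eq_smul_condKernel, integral_smul_measure, smul_eq_mul]

theorem ae_isFiniteMeasure_fiberR : ∀ᵐ γ ∂m, IsFiniteMeasure (fiberR m μ γ) := by
  filter_upwards [Measure.rnDeriv_lt_top μ.fst m] with γ hγ
  rw [fiberR_eq_smul_condKernel]
  exact Measure.smul_finite _ hγ.ne

variable [SigmaFinite m] {f : SigmaA N A × K → ℝ}

theorem integrable_integral_fiberR (hμ : μ.fst ≪ m) (hf : Integrable f μ) :
    Integrable (fun γ => ∫ z, f (γ, z) ∂fiberR m μ γ) m := by
  simp_rw [integral_fiberR]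
  exact (integrable_toReal_rnDeriv_mul_iff hμ).2 hf.integral_condKernel

theorem setIntegral_integral_fiberR (hμ : μ.fst ≪ m) (hf : Integrable f μ) {B : Set (SigmaA N A)}
    (hB : MeasurableSet B) :
    ∫ γ in B, ∫ z, f (γ, z) ∂fiberR m μ γ ∂m = ∫ p in Prod.fst ⁻¹' B, f p ∂μ := by
  simp_rw [integral_fiberR]
  rw [setIntegral_toReal_rnDeriv_mul hμ hB,
    Measure.setIntegral_condKernel_univ_right hB hf.integrableOn, prod_univ]

end Fibers

section FiberPairs

/-- The function `γ ↦ ∫ f(γ, ·) d(μ|_γ)`, where the signed measure `μ` is written as a difference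
`μ₁ - μ₂` of positive measures. -/
noncomputable def fiberIntegral (m : Measure (SigmaA N A)) (μ₁ μ₂ : Measure (SigmaA N A × K))
    (f : SigmaA N A × K → ℝ) (γ : SigmaA N A) : ℝ :=
  ∫ z, f (γ, z) ∂fiberR m μ₁ γ - ∫ z, f (γ, z) ∂fiberR m μ₂ γ

/-- The norm `‖φ₁‖_∞` of the marginal density of the signed measure `μ = μ₁ - μ₂`, so that `phiSup`
is its value on the Jordan parts. -/
noncomputable def phiSupPair (m : Measure (SigmaA N A)) (μ₁ μ₂ : Measure (SigmaA N A × K)) :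
    ℝ≥0∞ :=
  essSup (fun γ => ENNReal.ofReal |phiPair m μ₁ μ₂ γ|) m

variable {m : Measure (SigmaA N A)} {μ₁ μ₂ ν₁ ν₂ : Measure (SigmaA N A × K)}
  {f : SigmaA N A × K → ℝ}

theorem ae_ofReal_abs_fiberIntegral_le [IsFiniteMeasure μ₁] [IsFiniteMeasure μ₂]
    (hK : ∀ z w : K, dist z w ≤ 1) {a : ℝ≥0} (hf : ∀ γ, LipschitzWith a fun z => f (γ, z))
    (hf_le : ∀ p, |f p| ≤ 1) :
    ∀ᵐ γ ∂m, ENNReal.ofReal |fiberIntegral m μ₁ μ₂ f γ| ≤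
      a * infNormPair m μ₁ μ₂ + phiSupPair m μ₁ μ₂ := by
  have hnorm : ∀ᵐ γ ∂m, wDist (fiberR m μ₁ γ) (fiberR m μ₂ γ) ≤ infNormPair m μ₁ μ₂ :=
    ENNReal.ae_le_essSup _
  have hphi : ∀ᵐ γ ∂m, ENNReal.ofReal |phiPair m μ₁ μ₂ γ| ≤ phiSupPair m μ₁ μ₂ :=
    ENNReal.ae_le_essSup _
  filter_upwards [hnorm, hphi, ae_isFiniteMeasure_fiberR (μ := μ₁),
    ae_isFiniteMeasure_fiberR (μ := μ₂)] with γ hγ_norm hγ_phi _ _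
  have hγ := ofReal_abs_integral_sub_le_mul_wDist_add hK (fiberR m μ₁ γ) (fiberR m μ₂ γ) (hf γ)
    fun z => hf_le (γ, z)
  rw [fiberR_real_univ, fiberR_real_univ] at hγ
  exact hγ.trans (add_le_add (mul_le_mul_right hγ_norm _) hγ_phi)

variable [SigmaFinite m]

theorem MemABPair.integrable_fiberIntegral (hμ : MemABPair m μ₁ μ₂) (hf₁ : Integrable f μ₁)
    (hf₂ : Integrable f μ₂) : Integrable (fiberIntegral m μ₁ μ₂ f) m := by
  obtain ⟨hμ₁, hμ₂, _, _⟩ := hμ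
  exact (integrable_integral_fiberR hμ₁ hf₁).sub (integrable_integral_fiberR hμ₂ hf₂)

theorem MemABPair.setIntegral_fiberIntegral (hμ : MemABPair m μ₁ μ₂) (hf₁ : Integrable f μ₁)
    (hf₂ : Integrable f μ₂) {B : Set (SigmaA N A)} (hB : MeasurableSet B) :
    ∫ γ in B, fiberIntegral m μ₁ μ₂ f γ ∂m =
      ∫ p in Prod.fst ⁻¹' B, f p ∂μ₁ - ∫ p in Prod.fst ⁻¹' B, f p ∂μ₂ := by
  obtain ⟨hμ₁, hμ₂, _, _⟩ := hμ
  simp only [fiberIntegral]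
  rw [integral_sub (integrable_integral_fiberR hμ₁ hf₁).integrableOn
      (integrable_integral_fiberR hμ₂ hf₂).integrableOn,
    setIntegral_integral_fiberR hμ₁ hf₁ hB, setIntegral_integral_fiberR hμ₂ hf₂ hB]

variable {τ : SigmaA N A → SigmaA N A} {Φ : SigmaA N A × K → SigmaA N A × K}

theorem setIntegral_fiberIntegral_eq_preimage (hτ : Measurable τ) (hΦ : Measurable Φ)
    (hΦτ : Function.Semiconj Prod.fst Φ τ) (hμ : MemABPair m μ₁ μ₂) (hν : MemABPair m ν₁ ν₂)
    (hνμ : ν₁ + μ₂.map Φ = μ₁.map Φ + ν₂) (hf : Measurable f) {M : ℝ}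
    (hf_le : ∀ p, |f p| ≤ M) {B : Set (SigmaA N A)} (hB : MeasurableSet B) :
    ∫ γ in B, fiberIntegral m ν₁ ν₂ f γ ∂m =
      ∫ γ in τ ⁻¹' B, fiberIntegral m μ₁ μ₂ (f ∘ Φ) γ ∂m := by
  obtain ⟨-, -, _, _⟩ := id hμ
  obtain ⟨-, -, _, _⟩ := id hν
  have hf_int := integrable_of_forall_abs_le hf hf_le
  have hfΦ_int := integrable_of_forall_abs_le (hf.comp hΦ) fun p => hf_le (Φ p)
  have hmap (ρ : Measure (SigmaA N A × K)) :
      ∫ p in Prod.fst ⁻¹' B, f p ∂ρ.map Φ = ∫ p in Prod.fst ⁻¹' (τ ⁻¹' B), (f ∘ Φ) p ∂ρ := by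
    rw [setIntegral_map (measurable_fst hB) hf.aestronglyMeasurable hΦ.aemeasurable,
      ← preimage_comp, hΦτ.comp_eq, preimage_comp]
    rfl
  have hsum := congrArg (fun ρ => ∫ p in Prod.fst ⁻¹' B, f p ∂ρ) hνμ
  simp only [Measure.restrict_add] at hsum
  rw [integral_add_measure (hf_int _) (hf_int _), integral_add_measure (hf_int _) (hf_int _),
    hmap, hmap] at hsum
  rw [hν.setIntegral_fiberIntegral (hf_int _) (hf_int _) hB,
    hμ.setIntegral_fiberIntegral (hfΦ_int _) (hfΦ_int _) (hτ hB)]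
  linarith

theorem ae_ofReal_abs_fiberIntegral_le_of_add_map_eq (hτ : MeasurePreserving τ m m)
    (hΦ : Measurable Φ) (hΦτ : Function.Semiconj Prod.fst Φ τ) (hμ : MemABPair m μ₁ μ₂)
    (hν : MemABPair m ν₁ ν₂) (hνμ : ν₁ + μ₂.map Φ = μ₁.map Φ + ν₂) (hf : Measurable f)
    {M : ℝ} (hf_le : ∀ p, |f p| ≤ M) {C : ℝ≥0∞}
    (hC : ∀ᵐ γ ∂m, ENNReal.ofReal |fiberIntegral m μ₁ μ₂ (f ∘ Φ) γ| ≤ C) :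
    ∀ᵐ γ ∂m, ENNReal.ofReal |fiberIntegral m ν₁ ν₂ f γ| ≤ C := by
  obtain ⟨-, -, _, _⟩ := id hμ
  obtain ⟨-, -, _, _⟩ := id hν
  rcases eq_or_ne C ⊤ with rfl | hC_top
  · exact .of_forall fun _ => le_top
  have hf_int := integrable_of_forall_abs_le hf hf_le
  have hfΦ_int := integrable_of_forall_abs_le (hf.comp hΦ) fun p => hf_le (Φ p)
  simp only [ENNReal.ofReal_le_iff_le_toReal hC_top] at hC ⊢
  exact ae_abs_le_of_setIntegral_eq_setIntegral_preimage hτ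
    (hν.integrable_fiberIntegral (hf_int _) (hf_int _))
    (hμ.integrable_fiberIntegral (hfΦ_int _) (hfΦ_int _))
    (fun _ hB =>
      setIntegral_fiberIntegral_eq_preimage hτ.measurable hΦ hΦτ hμ hν hνμ hf hf_le hB) hC

theorem infNormPair_le_of_add_map_eq (hK : ∀ z w : K, dist z w ≤ 1)
    (hτ : MeasurePreserving τ m m) {a : ℝ≥0} (hΦ : IsFiberLipschitz a τ Φ)
    (hμ : MemABPair m μ₁ μ₂) (hν : MemABPair m ν₁ ν₂) (hνμ : ν₁ + μ₂.map Φ = μ₁.map Φ + ν₂) :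
    infNormPair m ν₁ ν₂ ≤ a * infNormPair m μ₁ μ₂ + phiSupPair m μ₁ μ₂ := by
  obtain ⟨-, -, _, _⟩ := id hμ
  obtain ⟨-, -, _, _⟩ := id hν
  refine essSup_le_of_ae_le _ (ae_wDist_le_of_forall_isTestFunction ae_isFiniteMeasure_fiberR
    ae_isFiniteMeasure_fiberR fun g hg => ?_)
  have hg_lip (γ : SigmaA N A) : LipschitzWith a fun z => g (Φ (γ, z)).2 := by
    rw [← one_mul a]
    exact hg.1.comp (hΦ.lipschitzWith γ)
  exact ae_ofReal_abs_fiberIntegral_le_of_add_map_eq (f := fun p => g p.2) hτ hΦ.measurable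
    hΦ.semiconj hμ hν hνμ (hg.measurable.comp measurable_snd) (fun p => hg.2 p.2)
    (ae_ofReal_abs_fiberIntegral_le hK hg_lip fun p => hg.2 (Φ p).2)

end FiberPairs

theorem transfer_infNorm_LasotaYorke_iterated_general
    (m : Measure (SigmaA N A)) [SigmaFinite m] (hσ : MeasurePreserving shift m m)
    (hdiam : Metric.diam (univ : Set K) ≤ 1)
    (G : SigmaA N A × K → K) (hGm : Measurable (skew G))
    (α : ℝ) (hα : 0 ≤ α) (hG1 : CondG1 G α)
    (μ : SignedMeasure (SigmaA N A × K)) (hμ : MemAB m μ) (n : ℕ) :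
    infNorm m ((transfer G)^[n] μ) ≤
      ENNReal.ofReal (α ^ n) * infNorm m μ + phiSup m μ := by
  lift α to ℝ≥0 using hα
  have hK (z w : K) : dist z w ≤ 1 :=
    (Metric.dist_le_diam_of_mem isCompact_univ.isBounded (mem_univ z) (mem_univ w)).trans hdiam
  have hσn : MeasurePreserving shift^[n] m m := hσ.iterate n
  have hFn : IsFiberLipschitz (α ^ n) shift^[n] (skew G)^[n] :=
    (hG1.isFiberLipschitz_skew hGm).iterate n
  have htransfer : (transfer G)^[n] μ = μ.map (skew G)^[n] := iterate_map_eq_map_iterate μ hGm n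
  rw [htransfer, ← NNReal.coe_pow, ENNReal.ofReal_coe_nnreal]
  exact infNormPair_le_of_add_map_eq hK hσn hFn hμ
    (hμ.map hσn.quasiMeasurePreserving hFn.measurable hFn.semiconj)
    (jPos_map_add_map_jNeg μ hFn.measurable)

theorem one_le_ofReal_one_div_one_sub {α : ℝ} (hα0 : 0 ≤ α) (hα1 : α < 1) :
    1 ≤ ENNReal.ofReal (1 / (1 - α)) := by
  rw [ENNReal.one_le_ofReal]
  exact one_le_one_div (sub_pos.2 hα1) (sub_le_self 1 hα0)

/-- Under (G1), for every `μ ∈ S^∞` and `n ≥ 1`,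
`‖F^{*n}μ‖_∞ ≤ α^n ‖μ‖_∞ + (1/(1-α)) ‖φ₁‖_∞`. -/
theorem transfer_infNorm_LasotaYorke_iterated
    (N : ℕ) (A : Fin N → Fin N → Bool) (hA : Aperiodic A)
    (θ : ℝ) (hθ0 : 0 < θ) (hθ1 : θ < 1)
    (m : Measure (SigmaA N A)) [IsProbabilityMeasure m]
    (hmM : IsMarkov m) (hminv : m.map shift = m)
    {K : Type*} [MetricSpace K] [CompactSpace K] [Nonempty K]
    [MeasurableSpace K] [BorelSpace K]
    (hdiam : Metric.diam (Set.univ : Set K) = 1)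
    (G : SigmaA N A × K → K) (hGm : Measurable (skew G))
    (α : ℝ) (hα0 : 0 < α) (hα1 : α < 1) (hG1 : CondG1 G α)
    (μ : SignedMeasure (SigmaA N A × K)) (hμ : MemS m θ μ) :
    ∀ n : ℕ, 1 ≤ n →
      infNorm m ((transfer G)^[n] μ) ≤
        ENNReal.ofReal (α ^ n) * infNorm m μ +
          ENNReal.ofReal (1 / (1 - α)) * phiSup m μ := by
  intro n _
  grw [transfer_infNorm_LasotaYorke_iterated_general m ⟨measurable_shift, hminv⟩ hdiam.le G hGm α
    hα0.le hG1 μ hμ.1 n]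
  gcongr
  exact le_mul_of_one_le_left' (one_le_ofReal_one_div_one_sub hα0.le hα1)

end RDS
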